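/- Let A be a unital C*-algebra, n,m ≥ 1, q ∈ ℂ with |q| = 1, and k ∈ ℝ with 0 < k < 1. Suppose s_1,…,s_n, t_1,…,t_m ∈ A satisfy the deformed (quon-type) relations: s_i* s_j = δ_{ij}(1 + k s_j s_i*) for all i,j = 1,…,n; t_r* t_l = δ_{rl}(1 + k t_l t_r*) for all r,l = 1,…,m; and s_j* t_r = q t_r s_j* for all j,r. Then t_r s_j = q s_j t_r for all j = 1,…,n and r = 1,…,m. -/

import Mathlib

/-!
Let `x* x = 1 + a x x*`, `y* y = 1 + b y y*`, `x* y = q y x*` with `|q| = 1`, and put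
`B = y x - q x y`. The relations for `x*` give `x* B = q a B x*`. Up to a scalar, `B` is also the
deformed commutator of `x` and `y` in the other order with parameter `q⁻¹`, so by symmetry
`y* B = q⁻¹ b B y*`. Since `B*` is a combination of `x* y*` and `y* x*`, it follows that
`B* B = a b B B*`, and the C*-identity turns this into `‖B‖² = |a b| ‖B‖²`.
-/

theorem mul_mul_eq_smul_of_mul_eq_smul {R A : Type*} [CommSemiring R] [Semiring A]
    [Algebra R A] {α β : R} {z w b : A}
    (hz : z * b = α • (b * z)) (hw : w * b = β • (b * w)) :
    z * w * b = (α * β) • (b * (z * w)) := by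
  rw [mul_assoc, hw, mul_smul_comm, ← mul_assoc, hz, smul_mul_assoc, smul_smul, mul_comm β,
    mul_assoc]

section Algebra

variable {R A : Type*} [CommRing R] [Ring A] [Algebra R A]

/-- The `q`-deformed commutator `[x, y]_q = x y - q y x`, which vanishes exactly when `x` and `y`
commute up to the scalar `q`. -/
def qCommutator (q : R) (x y : A) : A :=
  x * y - q • (y * x)

theorem qCommutator_eq_zero_iff {q : R} {x y : A} :
    qCommutator q x y = 0 ↔ x * y = q • (y * x) :=
  sub_eq_zero

theorem qCommutator_eq_neg_smul_swap {q p : R} (hqp : q * p = 1) (x y : A) :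
    qCommutator q x y = -q • qCommutator p y x := by
  simp only [qCommutator, smul_sub, smul_smul, neg_mul, hqp]
  module

theorem mul_qCommutator_eq_smul {q a : R} {x y z : A}
    (hzx : z * x = 1 + a • (x * z)) (hzy : z * y = q • (y * z)) :
    z * qCommutator q y x = (q * a) • (qCommutator q y x * z) := by
  have hzyx : z * (y * x) = q • y + (q * a) • (y * x * z) := by
    rw [← mul_assoc, hzy, smul_mul_assoc, mul_assoc, hzx, mul_add, mul_one, mul_smul_comm,
      smul_add, smul_smul, mul_assoc]
  have hzxy : z * (x * y) = y + (a * q) • (x * y * z) := by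
    rw [← mul_assoc, hzx, add_mul, one_mul, smul_mul_assoc, mul_assoc, hzy, mul_smul_comm,
      smul_smul, mul_assoc]
  rw [qCommutator, mul_sub, mul_smul_comm, hzyx, hzxy, sub_mul, smul_mul_assoc]
  module

theorem mul_qCommutator_eq_smul_of_mul_eq_one {q p b : R} (hqp : q * p = 1) {x y w : A}
    (hwy : w * y = 1 + b • (y * w)) (hwx : w * x = p • (x * w)) :
    w * qCommutator q y x = (p * b) • (qCommutator q y x * w) := by
  rw [qCommutator_eq_neg_smul_swap hqp, mul_smul_comm, mul_qCommutator_eq_smul hwy hwx,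
    smul_mul_assoc, smul_comm]

theorem qCommutator_mul_eq_smul {α β : R} {z w b : A} (p : R)
    (hz : z * b = α • (b * z)) (hw : w * b = β • (b * w)) :
    qCommutator p z w * b = (α * β) • (b * qCommutator p z w) := by
  rw [qCommutator, sub_mul, smul_mul_assoc, mul_mul_eq_smul_of_mul_eq_smul hz hw,
    mul_mul_eq_smul_of_mul_eq_smul hw hz, mul_comm β, mul_sub, mul_smul_comm, smul_sub,
    smul_comm p]

variable [StarRing R] [StarRing A] [StarModule R A]

theorem star_qCommutator (q : R) (x y : A) :
    star (qCommutator q x y) = qCommutator (star q) (star y) (star x) := by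
  simp only [qCommutator, star_sub, star_smul, star_mul]

theorem star_qCommutator_mul_self {q a b : R} (hq : q ∈ unitary R) {x y : A}
    (hx : star x * x = 1 + a • (x * star x)) (hy : star y * y = 1 + b • (y * star y))
    (hxy : star x * y = q • (y * star x)) :
    star (qCommutator q y x) * qCommutator q y x
      = (a * b) • (qCommutator q y x * star (qCommutator q y x)) := by
  have hq_star : q * star q = 1 := Unitary.mul_star_self_of_mem hq
  have hyx : star y * x = star q • (x * star y) := by
    simpa only [star_mul, star_smul, star_star] using congrArg star hxy
  have h_scalar : q * a * (star q * b) = a * b := by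
    linear_combination a * b * hq_star
  rw [star_qCommutator, qCommutator_mul_eq_smul (star q) (mul_qCommutator_eq_smul hx hxy)
    (mul_qCommutator_eq_smul_of_mul_eq_one hq_star hy hyx), h_scalar]

end Algebra

theorem eq_zero_of_star_mul_self_eq_smul {𝕜 A : Type*} [NormedField 𝕜] [NonUnitalNormedRing A]
    [StarRing A] [CStarRing A] [NormedSpace 𝕜 A] {c : 𝕜} (hc : ‖c‖ ≠ 1) {b : A}
    (hb : star b * b = c • (b * star b)) : b = 0 := by
  have h_norm : ‖b‖ * ‖b‖ = ‖c‖ * (‖b‖ * ‖b‖) := by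
    rw [← CStarRing.norm_self_mul_star, ← norm_smul, ← hb, CStarRing.norm_star_mul_self,
      CStarRing.norm_self_mul_star]
  by_contra hb_ne
  have hb_norm : ‖b‖ * ‖b‖ ≠ 0 := mul_self_ne_zero.mpr (norm_ne_zero_iff.mpr hb_ne)
  exact hc (right_eq_mul₀ hb_norm |>.mp h_norm)

theorem stmt_12_general {𝕜 A : Type*} [NormedField 𝕜] [StarRing 𝕜] [NormedRing A] [StarRing A]
    [CStarRing A] [NormedAlgebra 𝕜 A] [StarModule 𝕜 A] {q a b : 𝕜} (hq : q ∈ unitary 𝕜)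
    (hab : ‖a * b‖ ≠ 1) {x y : A} (hx : star x * x = 1 + a • (x * star x))
    (hy : star y * y = 1 + b • (y * star y)) (hxy : star x * y = q • (y * star x)) :
    y * x = q • (x * y) :=
  qCommutator_eq_zero_iff.mp <|
    eq_zero_of_star_mul_self_eq_smul hab (star_qCommutator_mul_self hq hx hy hxy)

theorem stmt_12 {A : Type*} [NormedRing A] [StarRing A] [CStarRing A]
    [NormedAlgebra ℂ A] [StarModule ℂ A] [CompleteSpace A]
    {n m : ℕ} (hn : 1 ≤ n) (hm : 1 ≤ m)
    (q : ℂ) (hq : ‖q‖ = 1) (k : ℝ) (hk0 : 0 < k) (hk1 : k < 1)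
    (s : Fin n → A) (t : Fin m → A)
    (hs : ∀ i j : Fin n, star (s i) * s j
      = if i = j then 1 + ((k : ℂ) • (s j * star (s i))) else 0)
    (ht : ∀ r l : Fin m, star (t r) * t l
      = if r = l then 1 + ((k : ℂ) • (t l * star (t r))) else 0)
    (hst : ∀ (j : Fin n) (r : Fin m), star (s j) * t r = q • (t r * star (s j))) :
    ∀ (j : Fin n) (r : Fin m), t r * s j = q • (s j * t r) := by
  intro j r
  have hq_unitary : q ∈ unitary ℂ := by
    rw [Unitary.mem_iff_self_mul_star]
    simp [Complex.mul_conj', hq]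
  have hk_norm : ‖(k : ℂ) * k‖ ≠ 1 := by
    rw [norm_mul, Complex.norm_of_nonneg hk0.le]
    exact (mul_lt_one_of_nonneg_of_lt_one_left hk0.le hk1 hk1.le).ne
  exact stmt_12_general hq_unitary hk_norm (by simpa only [if_true] using hs j j)
    (by simpa only [if_true] using ht r r) (hst j r)
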